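/- Let Z be a unique factorization domain, let f ∈ Z[X] be irreducible in Z[X] of positive degree, and let n ≥ 2 be an integer. Let σ(n) denote the radical of n, i.e., the product of the distinct primes dividing n. The following three statements are equivalent: (a) f(X^n) is not irreducible in Z[X]; (b) f(X^{σ(n)}) is not irreducible in Z[X], or 4 divides n and f(X^4) is not irreducible in Z[X]; (c) there exists a positive divisor t of n with t prime or t = 4 such that f(X^t) is not irreducible in Z[X]. -/

import Mathlib

open Polynomial

/-!
By Gauss's lemma and scaling one may work over a field `K` with `f` monic. If `g` is a root of `f`
and `L = K(g)`, then `f(X ^ n)` is irreducible over `K` iff `X ^ n - g` is irreducible over `L`.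
By Capelli's theorem the latter fails iff `g` is a `p`-th power in `L` for some prime `p ∣ n`, or
`4 ∣ n` and `g ∈ -4 L ^ 4`. Each of these obstructions is already visible on `X ^ p - g` or
`X ^ 4 - g`, that is, on `f(X ^ p)` or `f(X ^ 4)`.

Capelli's theorem is proved by adjoining one prime-degree root at a time: the norm carries an
obstruction for the new root down to one for the old constant, except in the quadratic case, where
the coordinates with respect to the basis `1, g` are used instead.
-/

universe u

/-- Capelli's condition on an element `a` of a field: `a` is not a `p`-th power for any prime
`p ∣ n`, and, if `4 ∣ n`, it is not of the form `-4 b ^ 4`. It characterizes the irreducibility of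
`X ^ n - a`. -/
def CapelliCondition {K : Type*} [Field K] (n : ℕ) (a : K) : Prop :=
  (∀ p : ℕ, p.Prime → p ∣ n → ∀ b : K, b ^ p ≠ a) ∧ (4 ∣ n → ∀ b : K, -4 * b ^ 4 ≠ a)

section RootAdjunction

variable {K L : Type*} [Field K] [Field L] [Algebra K L]

theorem pow_eq_algebraMap_of_minpoly_eq_X_pow_sub_C {x : L} {n : ℕ} {a : K}
    (hx : minpoly K x = X ^ n - C a) : x ^ n = algebraMap K L a := by
  simpa [hx, sub_eq_zero] using minpoly.aeval K x

variable {pb : PowerBasis K L} {n : ℕ} {a : K}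

theorem dim_eq_of_minpoly_gen_eq_X_pow_sub_C (hpb : minpoly K pb.gen = X ^ n - C a) :
    pb.dim = n := by
  rw [← pb.natDegree_minpoly, hpb, natDegree_X_pow_sub_C]

theorem norm_gen_of_minpoly_gen_eq_X_pow_sub_C (hn : n ≠ 0)
    (hpb : minpoly K pb.gen = X ^ n - C a) : Algebra.norm K pb.gen = (-1) ^ n * -a := by
  rw [Algebra.PowerBasis.norm_gen_eq_coeff_zero_minpoly, hpb,
    dim_eq_of_minpoly_gen_eq_X_pow_sub_C hpb]
  simp [hn.symm]

theorem exists_pow_eq_of_pow_eq_gen (hn : n ≠ 0) (hpb : minpoly K pb.gen = X ^ n - C a) {q : ℕ}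
    (hodd : Odd n ∨ Odd q) {b : L} (hb : b ^ q = pb.gen) : ∃ c : K, c ^ q = a := by
  have hnorm : Algebra.norm K b ^ q = (-1) ^ n * -a := by
    rw [← map_pow, hb, norm_gen_of_minpoly_gen_eq_X_pow_sub_C hn hpb]
  rcases n.even_or_odd with hn_even | hn_odd
  · have hq : Odd q := hodd.resolve_left (Nat.not_odd_iff_even.mpr hn_even)
    exact ⟨-Algebra.norm K b, by rw [hq.neg_pow, hnorm, hn_even.neg_one_pow]; ring⟩
  · exact ⟨Algebra.norm K b, by rw [hnorm, hn_odd.neg_one_pow]; ring⟩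

theorem neg_four_pow_mul_norm_pow_four (hn : n ≠ 0) (hpb : minpoly K pb.gen = X ^ n - C a) {b : L}
    (hb : -4 * b ^ 4 = pb.gen) : (-4) ^ n * Algebra.norm K b ^ 4 = (-1) ^ n * -a := by
  have hfour : (-4 : L) = algebraMap K L (-4) := by rw [map_neg, map_ofNat]
  rw [← norm_gen_of_minpoly_gen_eq_X_pow_sub_C hn hpb, ← hb, map_mul, map_pow, hfour,
    Algebra.norm_algebraMap, pb.finrank, dim_eq_of_minpoly_gen_eq_X_pow_sub_C hpb]

theorem exists_neg_four_mul_pow_four_eq_of_odd (hn : Odd n)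
    (hpb : minpoly K pb.gen = X ^ n - C a) {b : L} (hb : -4 * b ^ 4 = pb.gen) :
    ∃ c : K, -4 * c ^ 4 = a := by
  have hnorm := neg_four_pow_mul_norm_pow_four hn.pos.ne' hpb hb
  obtain ⟨k, rfl⟩ := hn
  refine ⟨2 ^ k * Algebra.norm K b, ?_⟩
  have hpow : (-4 : K) ^ (2 * k + 1) = -4 * (2 ^ k) ^ 4 := by
    rw [pow_succ', pow_mul, pow_right_comm 2 k 4]
    norm_num
  rw [hpow, (odd_two_mul_add_one k).neg_one_pow] at hnorm
  linear_combination hnorm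

theorem eq_zero_of_algebraMap_add_algebraMap_mul_gen_eq_zero (hdim : 1 < pb.dim) {c d : K}
    (h : algebraMap K L c + algebraMap K L d * pb.gen = 0) : c = 0 ∧ d = 0 := by
  have hzero : C d * X + C c = 0 := by
    by_contra hne
    have hle := pb.dim_le_natDegree_of_root hne (by simpa [add_comm] using h)
    exact absurd (hle.trans natDegree_linear_le) hdim.not_ge
  exact ⟨by simpa using congr_arg (coeff · 0) hzero, by simpa using congr_arg (coeff · 1) hzero⟩

theorem exists_neg_four_mul_pow_four_eq_of_sq_eq_gen (hpb : minpoly K pb.gen = X ^ 2 - C a)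
    {b : L} (hb : b ^ 2 = pb.gen) : ∃ c : K, -4 * c ^ 4 = a := by
  have hdim := dim_eq_of_minpoly_gen_eq_X_pow_sub_C hpb
  have hsq := pow_eq_algebraMap_of_minpoly_eq_X_pow_sub_C hpb
  obtain ⟨v, w, rfl⟩ :
      ∃ v w : K, b = algebraMap K L v * pb.gen + algebraMap K L w := by
    obtain ⟨q, hq, rfl⟩ := pb.exists_eq_aeval b
    refine ⟨q.coeff 1, q.coeff 0, ?_⟩
    conv_lhs => rw [q.eq_X_add_C_of_natDegree_le_one (by omega)]
    simp
  have hcoords : algebraMap K L (w ^ 2 + v ^ 2 * a) +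
      algebraMap K L (2 * w * v - 1) * pb.gen = 0 := by
    simp only [map_add, map_mul, map_sub, map_pow, map_one, map_ofNat, ← hsq]
    linear_combination hb
  obtain ⟨hconst, hlin⟩ :=
    eq_zero_of_algebraMap_add_algebraMap_mul_gen_eq_zero (by omega) hcoords
  exact ⟨w, by linear_combination (-4 * w ^ 2) * hconst + (a * (2 * w * v + 1)) * hlin⟩

theorem exists_sq_eq_gen_of_neg_four_mul_pow_four_eq_gen
    (hpb : minpoly K pb.gen = X ^ 2 - C a) {b : L} (hb : -4 * b ^ 4 = pb.gen) :
    ∃ c : L, c ^ 2 = pb.gen := by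
  have hsq := pow_eq_algebraMap_of_minpoly_eq_X_pow_sub_C hpb
  by_cases hgen : pb.gen = 0
  · exact ⟨0, by rw [hgen, zero_pow two_ne_zero]⟩
  set s : L := algebraMap K L (4 * Algebra.norm K b ^ 2) with hs
  -- The norm makes `gen / s` a square root of `-1`, so `-4 = (2 * gen / s) ^ 2`.
  have hgen_sq : pb.gen ^ 2 = -s ^ 2 := by
    rw [hsq, hs, ← map_pow, ← map_neg]
    congr 1
    linear_combination neg_four_pow_mul_norm_pow_four two_ne_zero hpb hb
  have hs_ne : s ≠ 0 := fun h ↦ hgen (by simpa [h] using hgen_sq)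
  refine ⟨2 * (pb.gen / s) * b ^ 2, ?_⟩
  rw [mul_pow, mul_pow, div_pow, hgen_sq, neg_div, div_self (pow_ne_zero 2 hs_ne)]
  linear_combination hb

theorem CapelliCondition.of_minpoly_gen_eq {p m : ℕ} (hp : p.Prime)
    (hpb : minpoly K pb.gen = X ^ p - C a) (ha : CapelliCondition (p * m) a) :
    CapelliCondition m pb.gen := by
  obtain ⟨ha_pow, ha_four⟩ := ha
  refine ⟨fun q hq hqm b hb ↦ ?_, fun hm b hb ↦ ?_⟩
  · by_cases hodd : Odd p ∨ Odd q
    · obtain ⟨c, hc⟩ := exists_pow_eq_of_pow_eq_gen hp.ne_zero hpb hodd hb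
      exact ha_pow q hq (hqm.mul_left p) c hc
    · obtain ⟨hp_odd, hq_odd⟩ := not_or.mp hodd
      obtain rfl : p = 2 := hp.eq_two_or_odd'.resolve_right hp_odd
      obtain rfl : q = 2 := hq.eq_two_or_odd'.resolve_right hq_odd
      obtain ⟨c, hc⟩ := exists_neg_four_mul_pow_four_eq_of_sq_eq_gen hpb hb
      exact ha_four (mul_dvd_mul_left 2 hqm) c hc
  · have hfour := ha_four (hm.mul_left p)
    rcases hp.eq_two_or_odd' with rfl | hp_odd
    · obtain ⟨b', hb'⟩ := exists_sq_eq_gen_of_neg_four_mul_pow_four_eq_gen hpb hb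
      obtain ⟨c, hc⟩ := exists_neg_four_mul_pow_four_eq_of_sq_eq_gen hpb hb'
      exact hfour c hc
    · obtain ⟨c, hc⟩ := exists_neg_four_mul_pow_four_eq_of_odd hp_odd hpb hb
      exact hfour c hc

theorem irreducible_X_pow_sub_C_gen_of_irreducible_expand (hn : n ≠ 0)
    (h : Irreducible (expand K n (minpoly K pb.gen))) : Irreducible (X ^ n - C pb.gen) := by
  have hne : X ^ n - C pb.gen ≠ 0 := X_pow_sub_C_ne_zero (Nat.pos_of_ne_zero hn) _
  have hnot_unit : ¬ IsUnit (X ^ n - C pb.gen) :=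
    not_isUnit_of_natDegree_pos _ (by rw [natDegree_X_pow_sub_C]; exact Nat.pos_of_ne_zero hn)
  obtain ⟨q, hq, hq_dvd⟩ := WfDvdMonoid.exists_irreducible_factor hnot_unit hne
  refine (associated_of_dvd_of_natDegree_le hq_dvd hne ?_).irreducible hq
  -- A root `r` of `q` has degree `n * pb.dim` over `K`, hence degree at least `n` over `L`.
  have := Fact.mk hq
  have := (AdjoinRoot.powerBasis hq.ne_zero).finite
  have := pb.finite
  have := Module.Finite.trans (R := K) L (AdjoinRoot q)
  set r := AdjoinRoot.root q
  have hr : r ^ n = algebraMap L (AdjoinRoot q) pb.gen := by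
    have hroot := eval₂_eq_zero_of_dvd_of_eval₂_eq_zero _ _ hq_dvd (AdjoinRoot.eval₂_root q)
    rwa [eval₂_sub, eval₂_pow, eval₂_C, eval₂_X, sub_eq_zero] at hroot
  have hr_aeval : aeval r (expand K n (minpoly K pb.gen)) = 0 := by
    rw [expand_aeval, hr, aeval_algebraMap_apply, minpoly.aeval, map_zero]
  have hr_minpoly := minpoly.eq_of_irreducible_of_monic h hr_aeval
    ((minpoly.monic pb.isIntegral_gen).expand (Nat.pos_of_ne_zero hn))
  have hdeg : pb.dim * n ≤ pb.dim * q.natDegree := calc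
    pb.dim * n = (minpoly K r).natDegree := by
      rw [← hr_minpoly, natDegree_expand, pb.natDegree_minpoly]
    _ ≤ Module.finrank K (AdjoinRoot q) := minpoly.natDegree_le r
    _ = pb.dim * q.natDegree := by
      rw [← Module.finrank_mul_finrank K L, pb.finrank,
        (AdjoinRoot.powerBasis hq.ne_zero).finrank, AdjoinRoot.powerBasis_dim]
  rw [natDegree_X_pow_sub_C]
  exact Nat.le_of_mul_le_mul_left hdeg pb.dim_pos

end RootAdjunction

theorem irreducible_expand_of_dvd {R : Type*} [CommRing R] [IsDomain R] {f : R[X]} {m n : ℕ}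
    (hn : n ≠ 0) (hmn : m ∣ n) (h : Irreducible (expand R n f)) : Irreducible (expand R m f) := by
  obtain ⟨k, rfl⟩ := hmn
  rw [mul_comm, expand_mul] at h
  exact of_irreducible_expand (right_ne_zero_of_mul hn) h

section Capelli

variable {K : Type u} [Field K]

theorem irreducible_X_pow_sub_C_of_capelliCondition {n : ℕ} (hn : n ≠ 0) {a : K}
    (ha : CapelliCondition n a) : Irreducible (X ^ n - C a) := by
  induction n using induction_on_primes generalizing K a with
  | zero => exact absurd rfl hn
  | one => simpa using irreducible_X_sub_C a
  | prime_mul p m hp ih =>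
    rw [mul_comm]
    have hirr := X_pow_sub_C_irreducible_of_prime hp (ha.1 p hp (dvd_mul_right p m))
    refine X_pow_mul_sub_C_irreducible hirr fun E _ _ x hx ↦ ?_
    have hx_int : IsIntegral K x := minpoly.ne_zero_iff.mp (hx ▸ hirr.ne_zero)
    have hpb : minpoly K (IntermediateField.adjoin.powerBasis hx_int).gen = X ^ p - C a := by
      rw [IntermediateField.adjoin.powerBasis_gen, IntermediateField.minpoly_gen, hx]
    exact ih (right_ne_zero_of_mul hn) (ha.of_minpoly_gen_eq hp hpb)

theorem not_irreducible_X_pow_four_sub_C_neg_four_mul_pow_four (b : K) :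
    ¬ Irreducible (X ^ 4 - C (-4 * b ^ 4)) := by
  intro h
  have hfactor : X ^ 4 - C (-4 * b ^ 4) =
      (C 1 * X ^ 2 + C (2 * b) * X + C (2 * b ^ 2)) *
        (C 1 * X ^ 2 + C (-2 * b) * X + C (2 * b ^ 2)) := by
    simp only [map_mul, map_pow, map_neg, map_ofNat, map_one]
    ring
  rcases h.isUnit_or_isUnit hfactor with hunit | hunit <;>
  · have hdeg := natDegree_eq_zero_of_isUnit hunit
    rw [natDegree_quadratic one_ne_zero] at hdeg
    exact two_ne_zero hdeg

theorem capelliCondition_of_irreducible_X_pow_sub_C {n : ℕ} {a : K}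
    (h : Irreducible (X ^ n - C a)) : CapelliCondition n a := by
  refine ⟨fun p hp hpn ↦ pow_ne_of_irreducible_X_pow_sub_C h hpn hp.ne_one, ?_⟩
  rintro hn b rfl
  have hexpand : expand K n (X - C (-4 * b ^ 4)) = X ^ n - C (-4 * b ^ 4) := by simp
  have hfour := irreducible_expand_of_dvd (ne_zero_of_irreducible_X_pow_sub_C h) hn (hexpand ▸ h)
  rw [map_sub, expand_X, expand_C] at hfour
  exact not_irreducible_X_pow_four_sub_C_neg_four_mul_pow_four b hfour

theorem irreducible_X_pow_sub_C_of_forall_prime_or_four {n : ℕ} (hn : n ≠ 0) {a : K}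
    (h : ∀ t, t ∣ n → t.Prime ∨ t = 4 → Irreducible (X ^ t - C a)) :
    Irreducible (X ^ n - C a) :=
  irreducible_X_pow_sub_C_of_capelliCondition hn
    ⟨fun p hp hpn ↦
      (capelliCondition_of_irreducible_X_pow_sub_C (h p hpn (.inl hp))).1 p hp dvd_rfl,
    fun hfour ↦
      (capelliCondition_of_irreducible_X_pow_sub_C (h 4 hfour (.inr rfl))).2 dvd_rfl⟩

theorem irreducible_expand_of_monic_of_forall_prime_or_four {f : K[X]} (hf : Irreducible f)
    (hf_monic : f.Monic) {n : ℕ} (hn : n ≠ 0)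
    (h : ∀ t, t ∣ n → t.Prime ∨ t = 4 → Irreducible (expand K t f)) :
    Irreducible (expand K n f) := by
  rw [expand_eq_comp_X_pow]
  refine irreducible_comp hf_monic (monic_X_pow n) hf fun E _ _ x hx ↦ ?_
  rw [Polynomial.map_pow, map_X]
  have hx_int : IsIntegral K x := minpoly.ne_zero_iff.mp (hx ▸ hf.ne_zero)
  have hpb : minpoly K (IntermediateField.adjoin.powerBasis hx_int).gen = f := by
    rw [IntermediateField.adjoin.powerBasis_gen, IntermediateField.minpoly_gen, hx]
  refine irreducible_X_pow_sub_C_of_forall_prime_or_four hn fun t htn ht ↦ ?_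
  exact irreducible_X_pow_sub_C_gen_of_irreducible_expand
    (pb := IntermediateField.adjoin.powerBasis hx_int) (ne_zero_of_dvd_ne_zero hn htn)
    (hpb ▸ h t htn ht)

theorem irreducible_expand_of_forall_prime_or_four {f : K[X]} (hf : Irreducible f) {n : ℕ}
    (hn : n ≠ 0) (h : ∀ t, t ∣ n → t.Prime ∨ t = 4 → Irreducible (expand K t f)) :
    Irreducible (expand K n f) := by
  classical
  have hnormalize (m : ℕ) :
      Irreducible (expand K m (normalize f)) ↔ Irreducible (expand K m f) :=
    ((normalize_associated f).map (expand K m)).irreducible_iff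
  rw [← hnormalize]
  exact irreducible_expand_of_monic_of_forall_prime_or_four
    ((normalize_associated f).irreducible_iff.mpr hf) (monic_normalize hf.ne_zero) hn
    fun t htn ht ↦ (hnormalize t).mpr (h t htn ht)

end Capelli

theorem isPrimitive_expand {R : Type*} [CommSemiring R] {f : R[X]} (hf : f.IsPrimitive) {n : ℕ}
    (hn : n ≠ 0) : (expand R n f).IsPrimitive := by
  intro r hr
  apply hf
  rw [C_dvd_iff_dvd_coeff] at hr ⊢
  intro i
  simpa only [coeff_expand_mul (Nat.pos_of_ne_zero hn)] using hr (i * n)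

section GCDDomain

variable {R : Type*} [CommRing R] [IsDomain R] [IsGCDMonoid R]

theorem irreducible_expand_iff_irreducible_expand_map (K : Type*) [Field K] [Algebra R K]
    [IsFractionRing R K] {f : R[X]} (hf : f.IsPrimitive) {n : ℕ} (hn : n ≠ 0) :
    Irreducible (expand R n f) ↔ Irreducible (expand K n (f.map (algebraMap R K))) := by
  rw [(isPrimitive_expand hf hn).irreducible_iff_irreducible_map_fraction_map (K := K), map_expand]

theorem irreducible_expand_iff_forall_prime_or_four (f : R[X]) {n : ℕ} (hn : 2 ≤ n) :
    Irreducible (expand R n f) ↔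
      ∀ t, t ∣ n → t.Prime ∨ t = 4 → Irreducible (expand R t f) := by
  have hn_ne : n ≠ 0 := by omega
  refine ⟨fun h t htn _ ↦ irreducible_expand_of_dvd hn_ne htn h, fun h ↦ ?_⟩
  obtain ⟨p, hp, hpn⟩ := n.exists_prime_and_dvd (by omega)
  have hf : Irreducible f := of_irreducible_expand hp.ne_zero (h p hpn (.inl hp))
  by_cases hdeg : f.natDegree = 0
  · rw [eq_C_of_natDegree_eq_zero hdeg] at hf ⊢
    rwa [expand_C]
  have hprim : f.IsPrimitive := hf.isPrimitive hdeg
  let K := FractionRing R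
  rw [irreducible_expand_iff_irreducible_expand_map K hprim hn_ne]
  refine irreducible_expand_of_forall_prime_or_four
    (hprim.irreducible_iff_irreducible_map_fraction_map.mp hf) hn_ne fun t htn ht ↦ ?_
  rw [← irreducible_expand_iff_irreducible_expand_map K hprim (ne_zero_of_dvd_ne_zero hn_ne htn)]
  exact h t htn ht

theorem irreducible_expand_iff_prod_primeFactors_and_four (f : R[X]) {n : ℕ} (hn : 2 ≤ n) :
    Irreducible (expand R n f) ↔ Irreducible (expand R (∏ p ∈ n.primeFactors, p) f) ∧
      (4 ∣ n → Irreducible (expand R 4 f)) := by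
  have hn_ne : n ≠ 0 := by omega
  refine ⟨fun h ↦ ⟨irreducible_expand_of_dvd hn_ne n.prod_primeFactors_dvd h,
    fun hfour ↦ irreducible_expand_of_dvd hn_ne hfour h⟩, fun ⟨hrad, hfour⟩ ↦ ?_⟩
  refine (irreducible_expand_iff_forall_prime_or_four f hn).mpr fun t htn ht ↦ ?_
  rcases ht with ht | rfl
  · have hrad_ne : ∏ p ∈ n.primeFactors, p ≠ 0 :=
      ne_zero_of_dvd_ne_zero hn_ne n.prod_primeFactors_dvd
    exact irreducible_expand_of_dvd hrad_ne
      (Finset.dvd_prod_of_mem _ (ht.mem_primeFactors htn hn_ne)) hrad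
  · exact hfour htn

theorem stmt7_general (f : R[X]) (n : ℕ) (hn : 2 ≤ n) :
    (¬ Irreducible (f.comp (X ^ n)) ↔
        (¬ Irreducible (f.comp (X ^ (∏ p ∈ n.primeFactors, p))) ∨
          (4 ∣ n ∧ ¬ Irreducible (f.comp (X ^ 4))))) ∧
      (¬ Irreducible (f.comp (X ^ n)) ↔
        ∃ t : ℕ, 0 < t ∧ t ∣ n ∧ (t.Prime ∨ t = 4) ∧ ¬ Irreducible (f.comp (X ^ t))) := by
  simp only [← expand_eq_comp_X_pow]
  constructor
  · rw [irreducible_expand_iff_prod_primeFactors_and_four f hn]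
    tauto
  · have hpos (t : ℕ) (htn : t ∣ n) : 0 < t := Nat.pos_of_dvd_of_pos htn (by omega)
    rw [irreducible_expand_iff_forall_prime_or_four f hn]
    push Not
    exact exists_congr fun t ↦ ⟨fun ⟨htn, h⟩ ↦ ⟨hpos t htn, htn, h⟩, And.right⟩

end GCDDomain

theorem stmt7 {Z : Type*} [CommRing Z] [IsDomain Z] [UniqueFactorizationMonoid Z]
    (f : Polynomial Z) (hf : Irreducible f) (hdeg : 0 < f.natDegree)
    (n : ℕ) (hn : 2 ≤ n) :
    (¬ Irreducible (f.comp (X ^ n)) ↔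
        (¬ Irreducible (f.comp (X ^ (∏ p ∈ n.primeFactors, p))) ∨
          (4 ∣ n ∧ ¬ Irreducible (f.comp (X ^ 4))))) ∧
      (¬ Irreducible (f.comp (X ^ n)) ↔
        ∃ t : ℕ, 0 < t ∧ t ∣ n ∧ (t.Prime ∨ t = 4) ∧ ¬ Irreducible (f.comp (X ^ t))) :=
  stmt7_general f n hn
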